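/- arXiv:2408.15210 — 4 statements merged into one kernel-verified Lean document; each statement's English description precedes it below -/
import Mathlib

section
/- Consider a deterministic controllable discrete-time LTI system P given by x_{k+1} = A x_k + B u_k, y_k = C x_k + D u_k with states x_k ∈ ℝ^{n_x}, inputs u_k ∈ ℝ^{n_u}, outputs y_k ∈ ℝ^{n_y}. Let u^m_k, x^m_k, y^m_k be a trajectory of P collected over time steps k = 0, ..., N + L + n_x - 2. If the input signal {u^m_k}_{k=0}^{N+L+n_x-2} is persistently exciting of order L + n_x, then for any L-long input–output trajectory (u_0, ..., u_{L-1}, y_0, ..., y_{L-1}) of P there exists a vector g ∈ ℝ^{N+n_x} such that the stacked block-Hankel matrix [H_{0,L,N+n_x}(u^m); H_{0,L,N+n_x}(y^m)] multiplied by g equals the stacked vector [u_0; ...; u_{L-1}; y_0; ...; y_{L-1}]. -/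
/-!
The stacked matrix `[H_L(u); X]` of the measured inputs and states, with `N + n_x` columns, has full
row rank. Given this, some combination `g` of its columns reproduces both the input `u` and the
initial state `x 0` of the target trajectory, and linearity of the dynamics propagates this to all
states and outputs.

For the rank claim, let `(η, ξ)` be in the left kernel. Put `η` in reversed order, followed by the
Markov-type parameters `ξ A ^ i B`, into one sequence `f` (`leftSeq`). Shifting the kernel relation
`j` times through the dynamics gives `ξ A ^ j x_b + ∑_{t < L + j} f (L + j - 1 - t) u_{b + t} = 0`
(`shifted_relation`). Weighting these by the coefficients of the characteristic polynomial of `A`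
removes the state by Cayley-Hamilton and leaves a vector in the left kernel of the Hankel matrix
of order `L + n_x`, which vanishes by persistency of excitation. The polynomial is monic, so this
vanishing is a linear recursion that forces `f = 0` on `[0, L + n_x)` (`leftSeq_eq_zero`).
Hence `η = 0` and `ξ A ^ i B = 0` for `i < n_x`, and controllability gives `ξ = 0`.
-/

open Matrix

/-- Block-Hankel matrix `H_{i,s,N}(w)` of a vector-valued sequence `w`:
the `((a, v), b)` entry is `w (i + a + b) v`. -/
noncomputable def blockHankel {ι : Type*} (w : ℕ → ι → ℝ) (i s N : ℕ) :
    Matrix (Fin s × ι) (Fin N) ℝ :=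
  Matrix.of fun p b => w (i + (p.1 : ℕ) + (b : ℕ)) p.2

/-- Controllability matrix `[B, AB, ..., A^{n-1}B]` of the pair `(A, B)`. -/
noncomputable def ctrbMat {n r : ℕ} (A : Matrix (Fin n) (Fin n) ℝ)
    (B : Matrix (Fin n) (Fin r) ℝ) : Matrix (Fin n) (Fin n × Fin r) ℝ :=
  Matrix.of fun i p => (A ^ (p.1 : ℕ) * B) i p.2

theorem eq_zero_of_vecMul_eq_zero_of_rank {m n : Type*} [Fintype m] [Fintype n]
    (M : Matrix m n ℝ) (h : M.rank = Fintype.card m) (v : m → ℝ) (hv : v ᵥ* M = 0) : v = 0 := by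
  have hli : LinearIndependent ℝ M.row := by
    rw [linearIndependent_iff_card_eq_finrank_span, ← h, rank_eq_finrank_span_row]
    rfl
  exact Matrix.vecMul_injective_iff.2 hli (by simpa using hv)

theorem mulVec_surjective_of_left_kernel {m n : Type*} [Fintype m] [Fintype n]
    (M : Matrix m n ℝ) (h : ∀ v : m → ℝ, v ᵥ* M = 0 → v = 0) (w : m → ℝ) :
    ∃ g, M *ᵥ g = w := by
  have hli : LinearIndependent ℝ M.row := by
    rw [← Matrix.vecMul_injective_iff]
    intro a b hab
    have := h (a - b) (by rw [Matrix.sub_vecMul]; exact sub_eq_zero.2 hab)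
    exact sub_eq_zero.1 this
  have hr : M.rank = Fintype.card m := hli.rank_matrix
  have ht : LinearMap.range M.mulVecLin = ⊤ := by
    apply Submodule.eq_top_of_finrank_eq
    rw [Module.finrank_fintype_fun_eq_card]
    exact hr
  obtain ⟨g, hg⟩ := LinearMap.range_eq_top.1 ht w
  exact ⟨g, hg⟩

/-- The sequence `η_{L-1}, …, η_0, ξ B, ξ A B, ξ A² B, …` attached to a pair `(η, ξ)`. Only the
values `η a` with `a < L` are used. -/
noncomputable def leftSeq {nx nu : ℕ} (L : ℕ) (A : Matrix (Fin nx) (Fin nx) ℝ)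
    (B : Matrix (Fin nx) (Fin nu) ℝ) (η : ℕ → Fin nu → ℝ) (ξ : Fin nx → ℝ) (i : ℕ) :
    Fin nu → ℝ :=
  if i < L then η (L - 1 - i) else ξ ᵥ* (A ^ (i - L) * B)

/-- The left-kernel relation at time `b + j`, rewritten in terms of the state at time `b`. -/
theorem shifted_relation {nx nu K L : ℕ} {A : Matrix (Fin nx) (Fin nx) ℝ}
    {B : Matrix (Fin nx) (Fin nu) ℝ} {um : ℕ → Fin nu → ℝ} {xm : ℕ → Fin nx → ℝ}
    (hx : ∀ k, k + 1 < K → xm (k + 1) = A *ᵥ xm k + B *ᵥ um k)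
    {η : ℕ → Fin nu → ℝ} {ξ : Fin nx → ℝ}
    (h0 : ∀ b < K, ξ ⬝ᵥ xm b + ∑ a ∈ Finset.range L, η a ⬝ᵥ um (b + a) = 0) (j : ℕ) :
    ∀ b, b + j < K → (ξ ᵥ* A ^ j) ⬝ᵥ xm b +
      ∑ t ∈ Finset.range (L + j), leftSeq L A B η ξ (L + j - 1 - t) ⬝ᵥ um (b + t) = 0 := by
  induction j with
  | zero =>
    intro b hb
    rw [pow_zero, Matrix.vecMul_one, ← h0 b hb]
    congr 1
    refine Finset.sum_congr rfl fun t ht => ?_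
    have ht := Finset.mem_range.1 ht
    rw [leftSeq, if_pos (by omega)]
    congr 2
    omega
  | succ j ih =>
    intro b hb
    have h := ih (b + 1) (by omega)
    rw [hx b (by omega), dotProduct_add, dotProduct_mulVec, dotProduct_mulVec, vecMul_vecMul,
      vecMul_vecMul, ← pow_succ] at h
    rw [← h, ← add_assoc L j 1, Finset.sum_range_succ']
    have hf : leftSeq L A B η ξ (L + j + 1 - 1 - 0) = ξ ᵥ* (A ^ j * B) := by
      rw [leftSeq, if_neg (by omega)]
      congr 3
      omega
    have hs : ∀ t ∈ Finset.range (L + j),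
        leftSeq L A B η ξ (L + j + 1 - 1 - (t + 1)) ⬝ᵥ um (b + (t + 1)) =
        leftSeq L A B η ξ (L + j - 1 - t) ⬝ᵥ um (b + 1 + t) := by
      intro t _
      congr 2 <;> omega
    rw [hf, Finset.sum_congr rfl hs, add_zero]
    ring

/-- Persistency of excitation kills the first `L + n_x` terms of `leftSeq`. -/
theorem leftSeq_eq_zero {nx nu N L : ℕ} {A : Matrix (Fin nx) (Fin nx) ℝ}
    {B : Matrix (Fin nx) (Fin nu) ℝ} {um : ℕ → Fin nu → ℝ} {xm : ℕ → Fin nx → ℝ}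
    (hx : ∀ k, k + 1 < N + nx → xm (k + 1) = A *ᵥ xm k + B *ᵥ um k)
    (hPE : (blockHankel um 0 (L + nx) N).rank = (L + nx) * nu)
    {η : ℕ → Fin nu → ℝ} {ξ : Fin nx → ℝ}
    (h0 : ∀ b < N + nx, ξ ⬝ᵥ xm b + ∑ a ∈ Finset.range L, η a ⬝ᵥ um (b + a) = 0) :
    ∀ s < L + nx, leftSeq L A B η ξ s = 0 := by
  set f := leftSeq L A B η ξ with hf
  set α := A.charpoly.coeff with hα
  have hdeg : A.charpoly.natDegree = nx := by
    simp
  have hlead : α nx = 1 := by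
    have := A.charpoly_monic.coeff_natDegree
    rwa [hdeg] at this
  have hCH : ∑ j ∈ Finset.range (nx + 1), α j • A ^ j = 0 := by
    have := A.aeval_self_charpoly
    rwa [Polynomial.aeval_eq_sum_range, hdeg] at this
  let v : ℕ → Fin nu → ℝ := fun t =>
    ∑ j ∈ Finset.range (nx + 1), if t < L + j then α j • f (L + j - 1 - t) else 0
  -- The weighted combination of the shifted relations no longer involves the state.
  have hvsum : ∀ b < N, ∑ t ∈ Finset.range (L + nx), v t ⬝ᵥ um (b + t) = 0 := by
    intro b hb
    have h1 : ∑ j ∈ Finset.range (nx + 1), α j * ((ξ ᵥ* A ^ j) ⬝ᵥ xm b +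
        ∑ t ∈ Finset.range (L + j), f (L + j - 1 - t) ⬝ᵥ um (b + t)) = 0 := by
      refine Finset.sum_eq_zero fun j hj => ?_
      have hj := Finset.mem_range.1 hj
      rw [hf, shifted_relation hx h0 j b (by omega), mul_zero]
    have h2 : ∑ j ∈ Finset.range (nx + 1), α j * ((ξ ᵥ* A ^ j) ⬝ᵥ xm b) = 0 := by
      have : ξ ⬝ᵥ ((∑ j ∈ Finset.range (nx + 1), α j • A ^ j) *ᵥ xm b) = 0 := by
        rw [hCH]; simp
      rw [← this, Matrix.sum_mulVec, dotProduct_sum]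
      refine Finset.sum_congr rfl fun j _ => ?_
      rw [smul_mulVec, dotProduct_smul, dotProduct_mulVec, smul_eq_mul]
    simp only [mul_add, Finset.sum_add_distrib, h2, zero_add] at h1
    rw [← h1]
    simp only [v, sum_dotProduct]
    rw [Finset.sum_comm]
    refine Finset.sum_congr rfl fun j hj => ?_
    have hj := Finset.mem_range.1 hj
    rw [Finset.mul_sum]
    symm
    apply Finset.sum_subset_zero_on_sdiff
    · intro t ht
      simp only [Finset.mem_range] at ht ⊢
      omega
    · intro t ht
      simp only [Finset.mem_sdiff, Finset.mem_range] at ht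
      rw [if_neg ht.2, zero_dotProduct]
    · intro t ht
      rw [if_pos (Finset.mem_range.1 ht), smul_dotProduct, smul_eq_mul]
  have hv : ∀ t < L + nx, v t = 0 := by
    have h := eq_zero_of_vecMul_eq_zero_of_rank (blockHankel um 0 (L + nx) N)
      (by rw [hPE]; simp) (fun p => v p.1 p.2) (by
        ext b
        have := hvsum b b.2
        rw [Finset.sum_range] at this
        simp only [vecMul, dotProduct, blockHankel, Matrix.of_apply, Fintype.sum_prod_type,
          Pi.zero_apply, zero_add]
        simp only [dotProduct] at this
        rw [← this]
        refine Finset.sum_congr rfl fun i _ => ?_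
        rw [add_comm (i : ℕ)])
    intro t ht
    ext c
    exact congrFun h (⟨t, ht⟩, c)
  intro s
  induction s using Nat.strong_induction_on with
  | _ s ih =>
    intro hs
    have h := hv (L + nx - 1 - s) (by omega)
    simp only [v] at h
    rw [Finset.sum_range_succ, if_pos (by omega), hlead, one_smul,
      Finset.sum_eq_zero, zero_add] at h
    · rw [← h]; congr 1; omega
    · intro j hj
      have hj := Finset.mem_range.1 hj
      split_ifs with hlt
      · rw [ih _ (by omega) (by omega), smul_zero]
      · rfl

/-- The matrix `[H_L(u); X]` of measured inputs and states has full row rank, hence its columns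
reach every input sequence and every initial state. -/
theorem exists_comb_input_state {nx nu N L : ℕ} {A : Matrix (Fin nx) (Fin nx) ℝ}
    {B : Matrix (Fin nx) (Fin nu) ℝ} {um : ℕ → Fin nu → ℝ} {xm : ℕ → Fin nx → ℝ}
    (hctrb : (ctrbMat A B).rank = nx)
    (hx : ∀ k, k + 1 < N + nx → xm (k + 1) = A *ᵥ xm k + B *ᵥ um k)
    (hPE : (blockHankel um 0 (L + nx) N).rank = (L + nx) * nu)
    (u : ℕ → Fin nu → ℝ) (x₀ : Fin nx → ℝ) :
    ∃ g : Fin (N + nx) → ℝ, (∀ a < L, ∑ b, g b • um (a + b) = u a) ∧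
      ∑ b, g b • xm b = x₀ := by
  obtain ⟨g, hg⟩ := mulVec_surjective_of_left_kernel
    (fromRows (blockHankel um 0 L (N + nx))
      (Matrix.of fun (i : Fin nx) (b : Fin (N + nx)) => xm b i))
    (by
      intro w hw
      let ξ : Fin nx → ℝ := fun i => w (Sum.inr i)
      let η : ℕ → Fin nu → ℝ := fun a c => if h : a < L then w (Sum.inl (⟨a, h⟩, c)) else 0
      have h0 : ∀ b < N + nx, ξ ⬝ᵥ xm b + ∑ a ∈ Finset.range L, η a ⬝ᵥ um (b + a) = 0 := by
        intro b hb
        have h := congrFun hw ⟨b, hb⟩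
        simp only [vecMul, dotProduct, Fintype.sum_sum_type, Fintype.sum_prod_type,
          fromRows_apply_inl, fromRows_apply_inr, blockHankel, Matrix.of_apply, Pi.zero_apply,
          zero_add] at h
        rw [← h, add_comm, Finset.sum_range]
        congr 1
        refine Finset.sum_congr rfl fun a _ => ?_
        simp only [dotProduct, η, a.2, dite_true, Fin.eta]
        rw [add_comm b]
      have hf := leftSeq_eq_zero hx hPE h0
      have hη : ∀ a < L, η a = 0 := by
        intro a ha
        have h := hf (L - 1 - a) (by omega)
        rw [leftSeq, if_pos (by omega)] at h
        rw [← h]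
        congr 1
        omega
      have hξ : ξ = 0 := by
        apply eq_zero_of_vecMul_eq_zero_of_rank (ctrbMat A B) (by simpa using hctrb)
        ext ⟨i, c⟩
        have h := hf (L + i) (by omega)
        rw [leftSeq, if_neg (by omega), Nat.add_sub_cancel_left] at h
        exact congrFun h c
      ext r
      rcases r with ⟨a, c⟩ | i
      · have h := congrFun (hη a a.2) c
        simpa [η] using h
      · exact congrFun hξ i)
    (Sum.elim (fun p : Fin L × Fin nu => u p.1 p.2) x₀)
  refine ⟨g, ?_, ?_⟩
  · intro a ha
    ext c
    have h := congrFun hg (Sum.inl (⟨a, ha⟩, c))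
    simp only [mulVec, dotProduct, fromRows, blockHankel, Matrix.of_apply, Sum.elim_inl,
      zero_add] at h
    rw [← h, Finset.sum_apply]
    exact Finset.sum_congr rfl fun b _ => mul_comm _ _
  · ext i
    have h := congrFun hg (Sum.inr i)
    simp only [mulVec, dotProduct, fromRows, Matrix.of_apply, Sum.elim_inr] at h
    rw [← h, Finset.sum_apply]
    exact Finset.sum_congr rfl fun b _ => mul_comm _ _

/-- **Willems' fundamental lemma.** For a controllable deterministic LTI system
`x_{k+1} = A x_k + B u_k`, `y_k = C x_k + D u_k`, if the measured input over
time steps `0, ..., N + L + n_x - 2` is persistently exciting of order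
`L + n_x`, then any `L`-long input-output trajectory of the system is a linear
combination (given by `g ∈ ℝ^{N+n_x}`) of the columns of the stacked
block-Hankel matrix of the measured inputs and outputs. -/
theorem willems_fundamental_lemma
    (nx nu ny N L : ℕ)
    (A : Matrix (Fin nx) (Fin nx) ℝ) (B : Matrix (Fin nx) (Fin nu) ℝ)
    (C : Matrix (Fin ny) (Fin nx) ℝ) (D : Matrix (Fin ny) (Fin nu) ℝ)
    (hctrb : (ctrbMat A B).rank = nx)
    (um : ℕ → Fin nu → ℝ) (xm : ℕ → Fin nx → ℝ) (ym : ℕ → Fin ny → ℝ)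
    (htraj_x : ∀ k, k + 3 ≤ N + L + nx → xm (k + 1) = A *ᵥ xm k + B *ᵥ um k)
    (htraj_y : ∀ k, k + 2 ≤ N + L + nx → ym k = C *ᵥ xm k + D *ᵥ um k)
    (hPE : (blockHankel um 0 (L + nx) N).rank = (L + nx) * nu) :
    ∀ (u : ℕ → Fin nu → ℝ) (y : ℕ → Fin ny → ℝ),
      (∃ x : ℕ → Fin nx → ℝ,
        (∀ k, k + 1 < L → x (k + 1) = A *ᵥ x k + B *ᵥ u k) ∧
        (∀ k, k < L → y k = C *ᵥ x k + D *ᵥ u k)) →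
      ∃ g : Fin (N + nx) → ℝ,
        (fromRows (blockHankel um 0 L (N + nx)) (blockHankel ym 0 L (N + nx))) *ᵥ g
          = Sum.elim (fun p : Fin L × Fin nu => u (p.1 : ℕ) p.2)
                     (fun p : Fin L × Fin ny => y (p.1 : ℕ) p.2) := by
  rintro u y ⟨x, hx, hy⟩
  rcases Nat.eq_zero_or_pos L with rfl | hL
  · refine ⟨0, ?_⟩
    ext r
    rcases r with ⟨a, _⟩ | ⟨a, _⟩ <;> exact a.elim0
  obtain ⟨g, hgu, hgx⟩ := exists_comb_input_state hctrb
    (fun k hk => htraj_x k (by omega)) hPE u (x 0)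
  have hst : ∀ a < L, ∑ b, g b • xm (a + b) = x a := by
    intro a
    induction a with
    | zero => intro _; simpa using hgx
    | succ a ih =>
      intro ha
      rw [hx a ha, ← ih (by omega), ← hgu a (by omega), mulVec_sum, mulVec_sum,
        ← Finset.sum_add_distrib]
      refine Finset.sum_congr rfl fun b _ => ?_
      rw [mulVec_smul, mulVec_smul, ← smul_add, ← htraj_x (a + b) (by omega)]
      congr 2
      omega
  have hout : ∀ a < L, ∑ b, g b • ym (a + b) = y a := by
    intro a ha
    rw [hy a ha, ← hst a ha, ← hgu a ha, mulVec_sum, mulVec_sum, ← Finset.sum_add_distrib]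
    refine Finset.sum_congr rfl fun b _ => ?_
    rw [mulVec_smul, mulVec_smul, ← smul_add, ← htraj_y (a + b) (by omega)]
  refine ⟨g, ?_⟩
  ext r
  rcases r with ⟨a, c⟩ | ⟨a, c⟩
  · have h := congrFun (hgu a a.2) c
    simp only [mulVec, dotProduct, fromRows, blockHankel, Matrix.of_apply, Sum.elim_inl, zero_add]
    rw [← h, Finset.sum_apply]
    exact Finset.sum_congr rfl fun b _ => mul_comm _ _
  · have h := congrFun (hout a a.2) c
    simp only [mulVec, dotProduct, fromRows, blockHankel, Matrix.of_apply, Sum.elim_inr, zero_add]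
    rw [← h, Finset.sum_apply]
    exact Finset.sum_congr rfl fun b _ => mul_comm _ _
end

section
/- Consider a deterministic discrete-time LTI system P given by x_{k+1} = A x_k + B u_k, y_k = C x_k + D u_k with states x_k ∈ ℝ^{n_x}, inputs u_k ∈ ℝ^{n_u}, outputs y_k ∈ ℝ^{n_y}, and let u^m_k, x^m_k, y^m_k be a trajectory of P over time steps k = 0, ..., N' + L - 2 (N' columns). If a vector g ∈ ℝ^{N'} satisfies [H_{0,1,N'}(x^m); H_{0,L,N'}(u^m)] g = [x_0; u_0; ...; u_{L-1}] for some x_0 ∈ ℝ^{n_x} and inputs u_0, ..., u_{L-1}, then H_{0,L,N'}(y^m) g = [y_0; ...; y_{L-1}], where (y_k)_{k=0}^{L-1} is the output trajectory of P generated from initial state x_0 with inputs (u_k)_{k=0}^{L-1}. -/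
/-! The vector `hankelState w k N *ᵥ g` is the combination, with weights `g`, of the `N` time-shifted
samples `w k, ..., w (k + N - 1)`, and it is also block row `k` of `blockHankel w 0 L N *ᵥ g`.
Each column of the data satisfies the same linear state and output equations, so
`hankelState xm (k + 1) N' = A * hankelState xm k N' + B * hankelState um k N'`, and similarly for
`ym` (`hankelState_eq_add`). Hence `k ↦ hankelState xm k N' *ᵥ g` starts at `x 0` and obeys the same
recursion as `x`, so the two agree for `k < L` by induction, and the output equation concludes. -/

open Matrix

/-- Depth-1 block-Hankel matrix `H_{i,1,N}(w)`, with rows indexed directly by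
the signal components. -/
noncomputable def hankelState {ι : Type*} (w : ℕ → ι → ℝ) (i N : ℕ) :
    Matrix ι (Fin N) ℝ :=
  Matrix.of fun r b => w (i + (b : ℕ)) r

/-- A pointwise linear relation between signals, holding on the whole window, passes to their
depth-1 Hankel matrices. The index `j` lets the left-hand signal be shifted in time. -/
lemma hankelState_eq_add {m n p N : ℕ} (M : Matrix (Fin p) (Fin m) ℝ)
    (K : Matrix (Fin p) (Fin n) ℝ) (v : ℕ → Fin m → ℝ) (w : ℕ → Fin n → ℝ)
    (z : ℕ → Fin p → ℝ) (j k : ℕ)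
    (h : ∀ b < N, z (j + b) = M *ᵥ v (k + b) + K *ᵥ w (k + b)) :
    hankelState z j N = M * hankelState v k N + K * hankelState w k N := by
  ext r b
  exact congrFun (h b b.2) r

lemma blockHankel_mulVec {n s N : ℕ} (w : ℕ → Fin n → ℝ) (g : Fin N → ℝ) (p : Fin s × Fin n) :
    (blockHankel w 0 s N *ᵥ g) p = (hankelState w p.1 N *ᵥ g) p.2 := by
  simp [blockHankel, hankelState, mulVec, dotProduct]

/-- For a deterministic LTI system `x_{k+1} = A x_k + B u_k`,
`y_k = C x_k + D u_k`, and a measured trajectory `u^m, x^m, y^m` over time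
steps `0, ..., N' + L - 2`: if a vector `g ∈ ℝ^{N'}` reproduces an initial
state `x_0` together with an input sequence `u_0, ..., u_{L-1}` from the
stacked state/input data matrix, then the same `g` applied to the output
block-Hankel matrix reproduces the output trajectory generated by the system
from `x_0` under those inputs. -/
theorem output_reproduced_from_state_input_match
    (nx nu ny N' L : ℕ)
    (A : Matrix (Fin nx) (Fin nx) ℝ) (B : Matrix (Fin nx) (Fin nu) ℝ)
    (C : Matrix (Fin ny) (Fin nx) ℝ) (D : Matrix (Fin ny) (Fin nu) ℝ)
    (um : ℕ → Fin nu → ℝ) (xm : ℕ → Fin nx → ℝ) (ym : ℕ → Fin ny → ℝ)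
    (htraj_x : ∀ k, k + 3 ≤ N' + L → xm (k + 1) = A *ᵥ xm k + B *ᵥ um k)
    (htraj_y : ∀ k, k + 2 ≤ N' + L → ym k = C *ᵥ xm k + D *ᵥ um k)
    (g : Fin N' → ℝ) (x0 : Fin nx → ℝ) (u : ℕ → Fin nu → ℝ)
    (hg : (fromRows (hankelState xm 0 N') (blockHankel um 0 L N')) *ᵥ g
          = Sum.elim x0 (fun p : Fin L × Fin nu => u (p.1 : ℕ) p.2))
    (x : ℕ → Fin nx → ℝ) (hx0 : x 0 = x0)
    (hx : ∀ k, k + 1 < L → x (k + 1) = A *ᵥ x k + B *ᵥ u k)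
    (y : ℕ → Fin ny → ℝ)
    (hy : ∀ k, k < L → y k = C *ᵥ x k + D *ᵥ u k) :
    (blockHankel ym 0 L N') *ᵥ g = fun p : Fin L × Fin ny => y (p.1 : ℕ) p.2 := by
  rw [fromRows_mulVec] at hg
  have hgx : hankelState xm 0 N' *ᵥ g = x0 := funext fun r => congrFun hg (Sum.inl r)
  have hgu : ∀ k < L, hankelState um k N' *ᵥ g = u k := fun k hk => funext fun r =>
    (blockHankel_mulVec um g (⟨k, hk⟩, r)).symm.trans (congrFun hg (Sum.inr (⟨k, hk⟩, r)))
  have hgs : ∀ k < L, hankelState xm k N' *ᵥ g = x k := by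
    intro k
    induction k with
    | zero => intro _; rw [hgx, hx0]
    | succ k ih =>
      intro hk
      rw [hankelState_eq_add A B xm um xm (k + 1) k, add_mulVec, ← mulVec_mulVec,
        ← mulVec_mulVec, ih (by omega), hgu k (by omega), hx k hk]
      intro b hb
      rw [show k + 1 + b = k + b + 1 by omega]
      exact htraj_x _ (by omega)
  ext p
  have hp := p.1.2
  rw [blockHankel_mulVec, hankelState_eq_add C D xm um ym p.1 p.1, add_mulVec, ← mulVec_mulVec,
    ← mulVec_mulVec, hgs _ hp, hgu _ hp, hy _ hp]
  exact fun b hb => htraj_y _ (by omega)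
end

section
/- (Theorem 2, part ii) Consider the deterministic augmented LTI system P_d: x_{k+1} = A x_k + B_d d_k + B u_k, d_{k+1} = A_d d_k, with x_k ∈ ℝ^{n_x}, d_k ∈ ℝ^{n_d}, u_k ∈ ℝ^{n_u}, augmented state x̄_k = [x_k; d_k] ∈ ℝ^{n̄}, n̄ = n_x + n_d. Let u^m_k, x̄^m_k be a measured trajectory of P_d over time steps k = 0, ..., N + L + n̄ - 2. Suppose the pair (A, B) is controllable, the controllability matrix of (A_d, d^m_0) has rank ν with 1 ≤ ν < n_d, and the input {u^m_k}_{k=0}^{N+L+n̄-2} is persistently exciting of order L + n̄. Then for every x_0 ∈ ℝ^{n_x}, every d_0 lying in the column space of the controllability matrix [d^m_0, A_d d^m_0, ..., A_d^{n_d-1} d^m_0], and every input sequence u_0, ..., u_{L-1} ∈ ℝ^{n_u}, there exists g ∈ ℝ^{N+n̄} such that [H_{0,1,N+n̄}(x̄^m); H_{0,L,N+n̄}(u^m)] g = [x_0; d_0; u_0; ...; u_{L-1}]. -/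
/-!
The columns of the stacked matrix span the stated subspace as soon as every linear functional
killing the columns also kills the target (`exists_mulVec_eq_of_annihilator`). A functional killing
the columns is a relation `ζ (z k) + ∑ i < L, W i (u (k + i)) = 0`, where `z k = (x k, d k)` is the
augmented state, which obeys `z (k + 1) = F (z k) + G (u k)`.

Since `rank (ctrbVec Ad (dm 0)) < nd`, some nonzero `q` of degree below `nd` satisfies
`q(Ad) (dm 0) = 0` (`exists_annihilating_poly`). Then `p = χ_A * q` has degree below `nx + nd`, and
`p(F)` kills every measured state because `F` is block triangular. Combining the relation at the
times `k, ..., k + deg p` with the coefficients of `p` eliminates the state and leaves a relation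
between the inputs alone, of depth at most `L + nx + nd`; by persistency of excitation all its
coefficients vanish. As the leading coefficient of `p` is nonzero, one triangular induction
(`relation_eq_zero`) gives `W = 0` and `ζ F^i G = 0` for `i < deg p`. Controllability of `(A, B)`
then kills the `x`-part of `ζ`, and what remains is a functional `η` on the `d`-space with
`η (Ad^k (dm 0)) = 0` for small `k`, hence for all `k` by the recurrence given by `q`.

Since `deg p` is strictly below `nx + nd`, the last of the `N + nx + nd` columns is never used. This
matters for `L = 0`, where the trajectory hypotheses do not constrain the state in that column.
-/

open Matrix

/-- Controllability matrix `[d₀, A_d d₀, ..., A_d^{n_d-1} d₀]` of a pair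
`(A_d, d₀)` consisting of a matrix and a vector. -/
noncomputable def ctrbVec {n : ℕ} (Ad : Matrix (Fin n) (Fin n) ℝ)
    (d0 : Fin n → ℝ) : Matrix (Fin n) (Fin n) ℝ :=
  Matrix.of fun i j => ((Ad ^ (j : ℕ)) *ᵥ d0) i

open Polynomial

/-- A vector orthogonal to the left kernel of a matrix lies in its column space. -/
lemma exists_mulVec_eq_of_annihilator {ι κ : Type*} [Fintype ι] [Fintype κ]
    (M : Matrix ι κ ℝ) (t : ι → ℝ)
    (h : ∀ y : ι → ℝ, (∀ k, ∑ i, y i * M i k = 0) → ∑ i, y i * t i = 0) :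
    ∃ g, M *ᵥ g = t := by
  classical
  by_contra hne
  have hnot : t ∉ LinearMap.range M.mulVecLin := by
    rintro ⟨g, hg⟩
    exact hne ⟨g, hg⟩
  obtain ⟨f, hft, hf⟩ := Submodule.exists_le_ker_of_notMem hnot
  have hfs : ∀ v : ι → ℝ, f v = ∑ i, f (Pi.single i 1) * v i := by
    intro v
    rw [LinearMap.pi_apply_eq_sum_univ f v]
    refine Finset.sum_congr rfl fun i _ => ?_
    rw [smul_eq_mul, mul_comm]
    congr 2
    ext j
    simp [Pi.single_apply, eq_comm]
  apply hft
  rw [hfs]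
  apply h
  intro k
  have h1 : f (M *ᵥ Pi.single k 1) = 0 := hf ⟨Pi.single k 1, rfl⟩
  rw [hfs] at h1
  simpa using h1

/-- A matrix whose rank is its number of rows has trivial left kernel. -/
lemma vec_eq_zero_of_rank {ι κ : Type*} [Fintype ι] [Fintype κ]
    (M : Matrix ι κ ℝ) (hM : M.rank = Fintype.card ι) (y : ι → ℝ)
    (h : ∀ k, ∑ i, y i * M i k = 0) : y = 0 := by
  have hli : LinearIndependent ℝ M.row := by
    rw [linearIndependent_iff_card_eq_finrank_span, ← hM, Matrix.rank_eq_finrank_span_row]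
    rfl
  have := Fintype.linearIndependent_iff.1 hli y (by
    ext k
    simpa [Finset.sum_apply, Matrix.row] using h k)
  exact funext this

/-- Persistency of excitation, as the absence of nontrivial linear relations of depth `M` between
consecutive inputs. -/
lemma pe_relation {nu M N : ℕ} (u : ℕ → Fin nu → ℝ)
    (hPE : (blockHankel u 0 M N).rank = M * nu)
    (C : ℕ → (Fin nu → ℝ) →ₗ[ℝ] ℝ)
    (h : ∀ k < N, ∑ m ∈ Finset.range M, C m (u (k + m)) = 0) : ∀ m < M, C m = 0 := by
  have hz := vec_eq_zero_of_rank (blockHankel u 0 M N) (by simpa using hPE)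
    (fun q => C q.1 (Pi.single q.2 1)) (by
      intro k
      rw [← h k k.2, Fintype.sum_prod_type, Finset.sum_range]
      refine Finset.sum_congr rfl fun m _ => ?_
      rw [LinearMap.pi_apply_eq_sum_univ (C m) (u _)]
      refine Finset.sum_congr rfl fun i _ => ?_
      rw [smul_eq_mul, mul_comm]
      congr 1
      · simp [blockHankel, add_comm]
      · congr 1
        ext j
        simp [Pi.single_apply, eq_comm])
  intro m hm
  ext i
  simpa using congrFun hz (⟨m, hm⟩, i)

lemma state_formula {V U : Type*} [AddCommGroup V] [Module ℝ V] [AddCommGroup U] [Module ℝ U]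
    (F : V →ₗ[ℝ] V) (G : U →ₗ[ℝ] V) (z : ℕ → V) (u : ℕ → U) (T : ℕ)
    (hz : ∀ k < T, z (k + 1) = F (z k) + G (u k)) (k j : ℕ) (hkj : k + j ≤ T) :
    z (k + j) = (F ^ j) (z k) + ∑ s ∈ Finset.range j, (F ^ s) (G (u (k + (j - 1 - s)))) := by
  induction j with
  | zero => simp
  | succ j ih =>
    rw [← add_assoc, hz _ (by omega), ih (by omega), Finset.sum_range_succ', map_add, map_sum]
    simp only [pow_succ', Module.End.mul_apply, pow_zero, Module.End.one_apply]
    rw [add_assoc]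
    congr 2
    refine Finset.sum_congr rfl fun s hs => ?_
    have := Finset.mem_range.1 hs
    rw [show j + 1 - 1 - (s + 1) = j - 1 - s by omega]

/-- The elimination step: if `p(F)` kills the states at times below `N`, then a relation between
the state and the next `L` inputs that holds up to time `T` has zero input part, and its state part
`ζ` kills `F^i G` for `i < deg p`. -/
lemma relation_eq_zero {V U : Type*} [AddCommGroup V] [Module ℝ V] [AddCommGroup U] [Module ℝ U]
    (F : V →ₗ[ℝ] V) (G : U →ₗ[ℝ] V) (ζ : V →ₗ[ℝ] ℝ) (W : ℕ → U →ₗ[ℝ] ℝ)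
    (z : ℕ → V) (u : ℕ → U) (L M N T : ℕ) (p : ℝ[X]) (hp : p ≠ 0)
    (hM : p.natDegree + L ≤ M) (hT : ∀ k < N, k + p.natDegree ≤ T)
    (hz : ∀ k < T, z (k + 1) = F (z k) + G (u k))
    (hpz : ∀ k < N, aeval F p (z k) = 0)
    (hf : ∀ k ≤ T, ζ (z k) + ∑ i ∈ Finset.range L, W i (u (k + i)) = 0)
    (hPE : ∀ C : ℕ → U →ₗ[ℝ] ℝ,
      (∀ k < N, ∑ m ∈ Finset.range M, C m (u (k + m)) = 0) → ∀ m < M, C m = 0) :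
    (∀ i < L, W i = 0) ∧ ∀ i < p.natDegree, ∀ v, ζ ((F ^ i) (G v)) = 0 := by
  -- `S t` is the coefficient of the input lying `t` steps before the latest input involved:
  -- the relation at time `k + j` reads `ζ (F^j z_k) + ∑ m < j + L, S (j + L - 1 - m) (u (k + m)) = 0`.
  set S : ℕ → U →ₗ[ℝ] ℝ := fun t =>
    if t < L then W (L - 1 - t) else ζ ∘ₗ (F ^ (t - L)) ∘ₗ G with hS
  set E : ℕ → ℕ → U →ₗ[ℝ] ℝ := fun j m => if m < j + L then S (j + L - 1 - m) else 0 with hE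
  have hrel : ∀ k j, k + j ≤ T → j + L ≤ M →
      ζ ((F ^ j) (z k)) + ∑ m ∈ Finset.range M, E j m (u (k + m)) = 0 := by
    intro k j hkj hjM
    rw [← hf (k + j) hkj, state_formula F G z u T hz k j hkj, map_add, map_sum, add_assoc]
    congr 1
    obtain ⟨r, rfl⟩ := Nat.exists_eq_add_of_le hjM
    rw [Finset.sum_range_add]
    have h0 : ∑ x ∈ Finset.range r, E j (j + L + x) (u (k + (j + L + x))) = 0 :=
      Finset.sum_eq_zero fun x _ => by simp [hE]
    rw [h0, add_zero, Finset.sum_range_add]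
    congr 1
    · rw [← Finset.sum_range_reflect]
      refine Finset.sum_congr rfl fun s hs => ?_
      have := Finset.mem_range.1 hs
      have h1 : j - 1 - s < j + L := by omega
      have h2 : ¬ (j + L - 1 - (j - 1 - s) < L) := by omega
      have h3 : j + L - 1 - (j - 1 - s) - L = s := by omega
      simp only [hE, hS, if_pos h1, if_neg h2, h3, LinearMap.comp_apply]
    · refine Finset.sum_congr rfl fun s hs => ?_
      have := Finset.mem_range.1 hs
      have h1 : j + s < j + L := by omega
      have h2 : j + L - 1 - (j + s) < L := by omega
      have h3 : L - 1 - (j + L - 1 - (j + s)) = s := by omega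
      simp only [hE, hS, if_pos h1, if_pos h2, h3, add_assoc]
  set D := p.natDegree with hD
  have hC := hPE (fun m => ∑ j ∈ Finset.range (D + 1), p.coeff j • E j m) (by
    intro k hk
    have h1 : ∑ j ∈ Finset.range (D + 1), p.coeff j *
        (ζ ((F ^ j) (z k)) + ∑ m ∈ Finset.range M, E j m (u (k + m))) = 0 := by
      refine Finset.sum_eq_zero fun j hj => ?_
      have := Finset.mem_range.1 hj
      have := hT k hk
      rw [hrel k j (by omega) (by omega), mul_zero]
    have h2 : ∑ j ∈ Finset.range (D + 1), p.coeff j * ζ ((F ^ j) (z k)) = 0 := by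
      have := congrArg ζ (hpz k hk)
      rw [aeval_eq_sum_range] at this
      simpa [LinearMap.sum_apply] using this
    simp only [mul_add, Finset.sum_add_distrib, h2, zero_add, Finset.mul_sum] at h1
    rw [Finset.sum_comm] at h1
    simpa [LinearMap.sum_apply] using h1)
  have hSz : ∀ s, s < D + L → S s = 0 := by
    intro s
    induction s using Nat.strong_induction_on with
    | _ s ih =>
      intro hs
      -- The coefficient of index `D + L - 1 - s` is `p_D • S s` plus multiples of earlier `S`.
      have h1 := hC (D + L - 1 - s) (by omega)
      rw [Finset.sum_range_succ, Finset.sum_eq_zero, zero_add] at h1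
      · have h2 : D + L - 1 - s < D + L := by omega
        have h3 : D + L - 1 - (D + L - 1 - s) = s := by omega
        simp only [hE, if_pos h2, h3] at h1
        exact (smul_eq_zero.1 h1).resolve_left (by simpa [hD] using hp)
      · intro j hj
        have := Finset.mem_range.1 hj
        simp only [hE]
        split_ifs with hlt
        · rw [ih _ (by omega) (by omega), smul_zero]
        · rw [smul_zero]
  constructor
  · intro i hi
    have h1 := hSz (L - 1 - i) (by omega)
    have h2 : L - 1 - i < L := by omega
    have h3 : L - 1 - (L - 1 - i) = i := by omega
    simpa only [hS, if_pos h2, h3] using h1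
  · intro i hi v
    have h1 := hSz (L + i) (by omega)
    have h2 : ¬ (L + i < L) := by omega
    have h3 : L + i - L = i := by omega
    simp only [hS, if_neg h2, h3] at h1
    simpa using LinearMap.congr_fun h1 v

/-- Polynomials in intertwined endomorphisms are intertwined. -/
lemma aeval_intertwine {V V' : Type*} [AddCommGroup V] [Module ℝ V] [AddCommGroup V'] [Module ℝ V']
    (F : V →ₗ[ℝ] V) (F' : V' →ₗ[ℝ] V') (P : V →ₗ[ℝ] V') (h : ∀ v, P (F v) = F' (P v))
    (p : ℝ[X]) (v : V) : P (aeval F p v) = aeval F' p (P v) := by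
  have hpow : ∀ (j : ℕ) (v : V), P ((F ^ j) v) = (F' ^ j) (P v) := by
    intro j
    induction j with
    | zero => simp
    | succ j ih =>
      intro v
      rw [pow_succ, Module.End.mul_apply, ih, h, pow_succ, Module.End.mul_apply]
  simp [aeval_eq_sum_range, LinearMap.sum_apply, hpow]

lemma exists_annihilating_poly {n : ℕ} (Ad : Matrix (Fin n) (Fin n) ℝ) (d : Fin n → ℝ)
    (h : (ctrbVec Ad d).rank < n) :
    ∃ q : ℝ[X], q ≠ 0 ∧ q.natDegree < n ∧ aeval Ad.mulVecLin q d = 0 := by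
  have hn : 0 < n := by omega
  have hnz : ∃ c : Fin n → ℝ, c ≠ 0 ∧ ctrbVec Ad d *ᵥ c = 0 := by
    rw [Matrix.exists_mulVec_eq_zero_iff]
    by_contra hdet
    have := Matrix.rank_of_isUnit (ctrbVec Ad d)
      ((Matrix.isUnit_iff_isUnit_det _).2 (isUnit_iff_ne_zero.2 hdet))
    simp at this
    omega
  obtain ⟨c, hc, hcd⟩ := hnz
  have hcoeff : ∀ j : Fin n, (∑ i : Fin n, C (c i) * X ^ (i : ℕ) : ℝ[X]).coeff j = c j := by
    intro j
    simp [finsetSum_coeff, coeff_X_pow, Fin.val_inj]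
  refine ⟨∑ i : Fin n, C (c i) * X ^ (i : ℕ), ?_, ?_, ?_⟩
  · intro h0
    apply hc
    ext j
    rw [← hcoeff j, h0]
    simp
  · refine lt_of_le_of_lt (natDegree_sum_le_of_forall_le (n := n - 1) _ _ ?_) (by omega)
    intro i _
    exact (natDegree_C_mul_X_pow_le _ _).trans (by omega)
  · ext r
    have h1 := congrFun hcd r
    simp only [Matrix.mulVec, dotProduct, ctrbVec, Matrix.of_apply] at h1
    simp only [map_sum, map_mul, aeval_C, map_pow, aeval_X, LinearMap.sum_apply,
      Finset.sum_apply, Module.End.mul_apply, Module.algebraMap_end_apply, Pi.smul_apply,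
      smul_eq_mul, Pi.zero_apply]
    refine Eq.trans ?_ h1
    refine Finset.sum_congr rfl fun i _ => ?_
    rw [mul_comm, ← Matrix.toLin'_apply', ← Matrix.toLin'_pow, Matrix.toLin'_apply]
    rfl

/-- A functional on a cyclic orbit that vanishes at the times below `deg q`, where `q(F)` kills the
generator, vanishes at all times. -/
lemma orbit_eq_zero {V : Type*} [AddCommGroup V] [Module ℝ V] (F : V →ₗ[ℝ] V) (η : V →ₗ[ℝ] ℝ)
    (d : V) (q : ℝ[X]) (hq : q ≠ 0) (hqd : aeval F q d = 0)
    (h : ∀ k < q.natDegree, η ((F ^ k) d) = 0) (k : ℕ) : η ((F ^ k) d) = 0 := by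
  induction k using Nat.strong_induction_on with
  | _ k ih =>
    by_cases hk : k < q.natDegree
    · exact h k hk
    obtain ⟨r, rfl⟩ := Nat.exists_eq_add_of_le (not_lt.1 hk)
    have h1 := congrArg (fun v => η ((F ^ r) v)) hqd
    simp only [aeval_eq_sum_range, LinearMap.sum_apply, LinearMap.smul_apply, map_sum, map_smul,
      ← Module.End.mul_apply, ← pow_add, map_zero, smul_eq_mul] at h1
    rw [Finset.sum_range_succ, Finset.sum_eq_zero, zero_add] at h1
    · rw [add_comm]
      exact (mul_eq_zero.1 h1).resolve_left (by simpa using hq)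
    · intro j hj
      have := Finset.mem_range.1 hj
      rw [ih _ (by omega), mul_zero]

/-- **Theorem 2, part (ii).** For the augmented system
`x_{k+1} = A x_k + B_d d_k + B u_k`, `d_{k+1} = A_d d_k`: if `(A, B)` is
controllable, the controllability matrix of `(A_d, d^m_0)` has rank `ν` with
`1 ≤ ν < n_d`, and the measured input over time steps `0, ..., N + L + n̄ - 2`
is persistently exciting of order `L + n̄`, then every stacked vector
`[x₀; d₀; u₀; ...; u_{L-1}]` with `d₀` in the column space of the
controllability matrix of `(A_d, d^m_0)` is reachable as a linear combination
`g` of the columns of the stacked augmented-state/input block-Hankel matrix. -/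
theorem augmented_state_input_hankel_span
    (nx nd nu N L ν : ℕ)
    (A : Matrix (Fin nx) (Fin nx) ℝ) (Bd : Matrix (Fin nx) (Fin nd) ℝ)
    (B : Matrix (Fin nx) (Fin nu) ℝ) (Ad : Matrix (Fin nd) (Fin nd) ℝ)
    (um : ℕ → Fin nu → ℝ) (xm : ℕ → Fin nx → ℝ) (dm : ℕ → Fin nd → ℝ)
    (htraj_x : ∀ k, k + 3 ≤ N + L + (nx + nd) →
      xm (k + 1) = A *ᵥ xm k + Bd *ᵥ dm k + B *ᵥ um k)
    (htraj_d : ∀ k, k + 3 ≤ N + L + (nx + nd) → dm (k + 1) = Ad *ᵥ dm k)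
    (hAB : (ctrbMat A B).rank = nx)
    (hAd : (ctrbVec Ad (dm 0)).rank = ν) (hν1 : 1 ≤ ν) (hνnd : ν < nd)
    (hPE : (blockHankel um 0 (L + (nx + nd)) N).rank = (L + (nx + nd)) * nu) :
    ∀ (x0 : Fin nx → ℝ) (d0 : Fin nd → ℝ),
      (∃ c : Fin nd → ℝ, (ctrbVec Ad (dm 0)) *ᵥ c = d0) →
      ∀ u : ℕ → Fin nu → ℝ,
        ∃ g : Fin (N + (nx + nd)) → ℝ,
          (fromRows (hankelState (fun k => Sum.elim (xm k) (dm k)) 0 (N + (nx + nd)))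
                    (blockHankel um 0 L (N + (nx + nd)))) *ᵥ g
            = Sum.elim (Sum.elim x0 d0)
                       (fun p : Fin L × Fin nu => u (p.1 : ℕ) p.2) := by
  intro x0 d0 ⟨c, hc⟩ u
  have hνlt : (ctrbVec Ad (dm 0)).rank < nd := by omega
  obtain ⟨q, hq, hqdeg, hqd⟩ := exists_annihilating_poly Ad (dm 0) hνlt
  apply exists_mulVec_eq_of_annihilator
  intro y hy
  set ξ : (Fin nx → ℝ) →ₗ[ℝ] ℝ := dotProductBilin ℝ ℝ (fun i => y (Sum.inl (Sum.inl i))) with hξ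
  set η : (Fin nd → ℝ) →ₗ[ℝ] ℝ := dotProductBilin ℝ ℝ (fun i => y (Sum.inl (Sum.inr i))) with hη
  set W : ℕ → (Fin nu → ℝ) →ₗ[ℝ] ℝ := fun a =>
    dotProductBilin ℝ ℝ (fun i => if h : a < L then y (Sum.inr (⟨a, h⟩, i)) else 0) with hW
  have hval : ∀ (x : Fin nx → ℝ) (d : Fin nd → ℝ) (v : ℕ → Fin nu → ℝ),
      ∑ i, y i * Sum.elim (Sum.elim x d) (fun p : Fin L × Fin nu => v (p.1 : ℕ) p.2) i
        = ξ x + η d + ∑ a ∈ Finset.range L, W a (v a) := by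
    intro x d v
    rw [Finset.sum_range]
    simp [hξ, hη, hW, Fintype.sum_sum_type, Fintype.sum_prod_type, dotProductBilin, dotProduct]
  set FA := A.mulVecLin with hFA
  set FD := Ad.mulVecLin with hFD
  -- The augmented system `z (k + 1) = F (z k) + G (u k)`.
  set F : ((Fin nx → ℝ) × (Fin nd → ℝ)) →ₗ[ℝ] ((Fin nx → ℝ) × (Fin nd → ℝ)) :=
    (FA.coprod Bd.mulVecLin).prod (FD ∘ₗ LinearMap.snd ℝ _ _) with hF
  set G : (Fin nu → ℝ) →ₗ[ℝ] ((Fin nx → ℝ) × (Fin nd → ℝ)) :=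
    LinearMap.inl ℝ _ _ ∘ₗ B.mulVecLin with hG
  set T := N + (nx + nd) - 2 with hT
  have hdm : ∀ k ≤ T, dm k = (FD ^ k) (dm 0) := by
    intro k
    induction k with
    | zero => simp
    | succ k ih =>
      intro hk
      rw [htraj_d k (by omega), ih (by omega), pow_succ', Module.End.mul_apply]
      rfl
  have hinl : ∀ x, LinearMap.inl ℝ (Fin nx → ℝ) (Fin nd → ℝ) (FA x)
      = F (LinearMap.inl ℝ _ _ x) := by
    intro x
    simp [hF]
  have hdegA : A.charpoly.natDegree = nx := by simp [Matrix.charpoly_natDegree_eq_dim]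
  have hA0 : A.charpoly ≠ 0 := A.charpoly_monic.ne_zero
  have hdeg : (A.charpoly * q).natDegree = nx + q.natDegree := by
    rw [natDegree_mul hA0 hq, hdegA]
  have hcol : ∀ k ≤ T, (ξ.coprod η) (xm k, dm k)
      + ∑ i ∈ Finset.range L, W i (um (k + i)) = 0 := by
    intro k hk
    have h1 := hy ⟨k, by omega⟩
    rw [LinearMap.coprod_apply, ← hval (xm k) (dm k) (fun a => um (k + a)), ← h1]
    refine Finset.sum_congr rfl fun i _ => ?_
    rcases i with (i | i) | ⟨a, i⟩ <;> simp [hankelState, blockHankel, add_comm]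
  obtain ⟨hW0, hζ⟩ := relation_eq_zero F G (ξ.coprod η) W (fun k => (xm k, dm k)) um L
    (L + (nx + nd)) N T (A.charpoly * q) (mul_ne_zero hA0 hq) (by omega)
    (by intro k hk; omega)
    (by
      intro k hk
      simp only [htraj_x k (by omega), htraj_d k (by omega), hF, hG]
      ext <;> simp [hFA, hFD])
    (by
      intro k hk
      -- `q(F)` moves `z k` into the `x`-space, where `F` acts as `A`, and Cayley–Hamilton applies.
      rw [map_mul, Module.End.mul_apply]
      have h2 : (aeval F q (xm k, dm k)).2 = 0 := by
        have h3 := aeval_intertwine F FD (LinearMap.snd ℝ _ _) (by intro v; simp [hF]) q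
          (xm k, dm k)
        simp only [LinearMap.snd_apply] at h3
        have h6 : aeval FD q * FD ^ k = FD ^ k * aeval FD q := by
          rw [← aeval_X_pow (R := ℝ) FD, ← map_mul, mul_comm, map_mul]
        rw [h3, hdm k (by omega), ← Module.End.mul_apply, h6, Module.End.mul_apply, hqd, map_zero]
      have h4 : aeval F q (xm k, dm k)
          = LinearMap.inl ℝ _ _ (aeval F q (xm k, dm k)).1 := by
        ext <;> simp [h2]
      have h5 : aeval FA A.charpoly = 0 := by
        have := FA.aeval_self_charpoly
        rwa [hFA, ← Matrix.toLin'_apply', Matrix.charpoly_toLin'] at this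
      rw [h4, ← aeval_intertwine FA F (LinearMap.inl ℝ _ _) hinl, h5]
      simp)
    hcol (pe_relation um hPE)
  have hξ0 : (fun i => y (Sum.inl (Sum.inl i))) = 0 := by
    have hAB' : (ctrbMat A B).rank = Fintype.card (Fin nx) := by simpa using hAB
    refine vec_eq_zero_of_rank (ctrbMat A B) hAB' _ ?_
    rintro ⟨a, i⟩
    have h1 := hζ a (by omega) (Pi.single i 1)
    have h2 : (F ^ (a : ℕ)) (G (Pi.single i 1))
        = LinearMap.inl ℝ _ _ ((FA ^ (a : ℕ)) (B *ᵥ Pi.single i 1)) := by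
      have := aeval_intertwine FA F (LinearMap.inl ℝ _ _) hinl (X ^ (a : ℕ)) (B *ᵥ Pi.single i 1)
      simp only [map_pow, aeval_X] at this
      rw [this]
      rfl
    rw [h2, hFA, ← Matrix.toLin'_apply', ← Matrix.toLin'_pow, Matrix.toLin'_apply,
      Matrix.mulVec_mulVec] at h1
    simpa [hξ, dotProductBilin, dotProduct, ctrbMat] using h1
  have hξz : ξ = 0 := by rw [hξ, hξ0, map_zero]
  have hWs : ∀ v : ℕ → Fin nu → ℝ, ∑ a ∈ Finset.range L, W a (v a) = 0 := fun v =>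
    Finset.sum_eq_zero fun a ha => by rw [hW0 a (Finset.mem_range.1 ha)]; rfl
  have hηk : ∀ k, η ((FD ^ k) (dm 0)) = 0 := by
    refine orbit_eq_zero FD η (dm 0) q hq hqd fun k hk => ?_
    have h1 := hcol k (by omega)
    rw [hWs (fun a => um (k + a)), LinearMap.coprod_apply, hξz] at h1
    rw [← hdm k (by omega)]
    simpa using h1
  have hηd : η d0 = 0 := by
    have h1 : d0 = ∑ j : Fin nd, c j • (FD ^ (j : ℕ)) (dm 0) := by
      rw [← hc]
      ext r
      simp only [Matrix.mulVec, dotProduct, ctrbVec, Matrix.of_apply, Finset.sum_apply,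
        Pi.smul_apply, smul_eq_mul]
      refine Finset.sum_congr rfl fun j _ => ?_
      rw [mul_comm, hFD, ← Matrix.toLin'_apply', ← Matrix.toLin'_pow, Matrix.toLin'_apply]
      rfl
    rw [h1, map_sum]
    exact Finset.sum_eq_zero fun j _ => by rw [map_smul, hηk, smul_zero]
  rw [hval x0 d0 u, hWs u, hηd, hξz]
  simp
end

section
/- (Left-kernel input component vanishes) Consider the deterministic augmented LTI system P_d: x_{k+1} = A x_k + B_d d_k + B u_k, d_{k+1} = A_d d_k, with x_k ∈ ℝ^{n_x}, d_k ∈ ℝ^{n_d}, u_k ∈ ℝ^{n_u}, augmented state x̄_k = [x_k; d_k] ∈ ℝ^{n̄}, n̄ = n_x + n_d. Let u^m_k, x̄^m_k be a measured trajectory of P_d over time steps k = 0, ..., N + L + n̄ - 2 with {u^m_k}_{k=0}^{N+L+n̄-2} persistently exciting of order L + n̄. If a row vector [ξ, η] with ξ ∈ ℝ^{1×n̄} and η ∈ ℝ^{1×L n_u} satisfies [ξ, η] · [H_{0,1,N+n̄}(x̄^m); H_{0,L,N+n̄}(u^m)] = 0, then η = 0. -/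
/-!
Write the augmented system as `z (k+1) = F z k + G u k` and let `n` be the dimension of `z`.
A left-kernel vector says `ξ · z b + ∑ p, e p · u (b + p) = 0` for all `b < N + n`, where `e` is
`η` extended by zero. Reading this relation at time `b + j` and eliminating the state back to time
`b` gives, for every `j ≤ n` and `b < N`, a relation with state coefficient `ξ F ^ j` and input
coefficients `shiftCoeff … j` (`shiftCoeff_relation`): for `p ≥ j` these are just `e (p - j)`.
Combining them with the coefficients of the characteristic polynomial of `F` removes the state by
Cayley–Hamilton, and leaves a left-kernel vector of the order `L + n` Hankel matrix of `u`, which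
vanishes by persistency of excitation. At positions `p ≥ n` its entries are
`∑ j, c j • e (p - j)` with `c n = 1`, a triangular system that forces `e = 0`, from the last
block backwards (`eq_zero_of_triangular`).
-/

open Matrix

/-- Coefficients, on the inputs `u b, u (b + 1), …`, of the relation
`ξ · z (b + j) + ∑ p, e p · u (b + j + p) = 0` after the state `z (b + j)` has been expressed
through `z b` and the inputs by `z (k + 1) = F z k + G u k`. -/
noncomputable def shiftCoeff {σ τ : Type*} [Fintype σ] [DecidableEq σ]
    (F : Matrix σ σ ℝ) (G : Matrix σ τ ℝ) (ξ : σ → ℝ) (e : ℕ → τ → ℝ) : ℕ → ℕ → τ → ℝ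
  | 0, p => e p
  | j + 1, 0 => (ξ ᵥ* F ^ j) ᵥ* G
  | j + 1, p + 1 => shiftCoeff F G ξ e j p

lemma shiftCoeff_add {σ τ : Type*} [Fintype σ] [DecidableEq σ]
    (F : Matrix σ σ ℝ) (G : Matrix σ τ ℝ) (ξ : σ → ℝ) (e : ℕ → τ → ℝ) (j q : ℕ) :
    shiftCoeff F G ξ e j (q + j) = e q := by
  induction j with
  | zero => rfl
  | succ j ih => rw [← add_assoc, shiftCoeff, ih]

lemma shiftCoeff_relation {σ τ : Type*} [Fintype σ] [DecidableEq σ] [Fintype τ]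
    (F : Matrix σ σ ℝ) (G : Matrix σ τ ℝ) (ξ : σ → ℝ) (e : ℕ → τ → ℝ)
    (z : ℕ → σ → ℝ) (u : ℕ → τ → ℝ) (M L : ℕ)
    (hz : ∀ k, k + 1 < M → z (k + 1) = F *ᵥ z k + G *ᵥ u k)
    (h0 : ∀ K, L ≤ K → ∀ b, b < M →
      ξ ⬝ᵥ z b + ∑ p ∈ Finset.range K, e p ⬝ᵥ u (b + p) = 0) (j : ℕ) :
    ∀ K, L + j ≤ K → ∀ b, b + j < M →
      (ξ ᵥ* F ^ j) ⬝ᵥ z b + ∑ p ∈ Finset.range K, shiftCoeff F G ξ e j p ⬝ᵥ u (b + p) = 0 := by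
  induction j with
  | zero => simpa [shiftCoeff] using h0
  | succ j ih =>
    intro K hK b hb
    obtain ⟨K, rfl⟩ : ∃ K', K = K' + 1 := ⟨K - 1, by omega⟩
    have h := ih K (by omega) (b + 1) (by omega)
    rw [hz b (by omega), dotProduct_add, dotProduct_mulVec, dotProduct_mulVec, vecMul_vecMul,
      ← pow_succ] at h
    rw [Finset.sum_range_succ']
    simp only [shiftCoeff, add_zero]
    have e1 : ∀ p, b + 1 + p = b + (p + 1) := fun p => by omega
    simp only [e1] at h
    linarith

/-- A finitely supported sequence annihilated by a monic recurrence is zero: the recurrence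
expresses each term through later ones. -/
lemma eq_zero_of_triangular {V : Type*} [AddCommGroup V] [Module ℝ V] (n L : ℕ) (c : ℕ → ℝ)
    (hc : c n = 1) (e : ℕ → V) (he : ∀ p, L ≤ p → e p = 0)
    (h : ∀ q, q < L → ∑ j ∈ Finset.range (n + 1), c j • e (q + (n - j)) = 0) (p : ℕ) :
    e p = 0 := by
  have key : ∀ m p, L ≤ p + m → e p = 0 := by
    intro m
    induction m with
    | zero => exact fun p hp => he p hp
    | succ m ih =>
      intro p hp
      rcases le_or_gt L p with hL | hL
      · exact he p hL
      · have h1 := h p hL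
        rw [Finset.sum_range_succ, Finset.sum_eq_zero] at h1
        · simpa [hc] using h1
        · intro j hj
          rw [ih _ (by have := Finset.mem_range.1 hj; omega), smul_zero]
  exact key L p (by omega)

lemma vecMul_blockHankel {ι : Type*} [Fintype ι] (w : ℕ → ι → ℝ) (s N : ℕ) (f : ℕ → ι → ℝ)
    (b : Fin N) :
    ((fun p : Fin s × ι => f p.1 p.2) ᵥ* blockHankel w 0 s N) b =
      ∑ p ∈ Finset.range s, f p ⬝ᵥ w (b + p) := by
  rw [← Fin.sum_univ_eq_sum_range (fun p => f p ⬝ᵥ w (b + p))]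
  simp [vecMul, dotProduct, blockHankel, Fintype.sum_prod_type, add_comm]

lemma vecMul_injective_of_rank {m k : Type*} [Fintype m] [Fintype k]
    (M : Matrix m k ℝ) (h : M.rank = Fintype.card m) (v : m → ℝ) (hv : v ᵥ* M = 0) : v = 0 := by
  have hli : LinearIndependent ℝ M.row := by
    rw [linearIndependent_iff_card_eq_finrank_span, ← h, M.rank_eq_finrank_span_row]
    rfl
  exact Matrix.vecMul_injective_iff.2 hli (by simpa using hv)

/-- **Left-kernel input component vanishes.** For the augmented system
`x_{k+1} = A x_k + B_d d_k + B u_k`, `d_{k+1} = A_d d_k` with augmented state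
`x̄_k = [x_k; d_k]`: if the measured input over time steps
`0, ..., N + L + n̄ - 2` is persistently exciting of order `L + n̄`, then any
row vector `[ξ, η]` in the left kernel of the stacked augmented-state/input
block-Hankel matrix has `η = 0`. -/
theorem left_kernel_input_component_vanishes
    (nx nd nu N L : ℕ)
    (A : Matrix (Fin nx) (Fin nx) ℝ) (Bd : Matrix (Fin nx) (Fin nd) ℝ)
    (B : Matrix (Fin nx) (Fin nu) ℝ) (Ad : Matrix (Fin nd) (Fin nd) ℝ)
    (um : ℕ → Fin nu → ℝ) (xm : ℕ → Fin nx → ℝ) (dm : ℕ → Fin nd → ℝ)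
    (htraj_x : ∀ k, k + 3 ≤ N + L + (nx + nd) →
      xm (k + 1) = A *ᵥ xm k + Bd *ᵥ dm k + B *ᵥ um k)
    (htraj_d : ∀ k, k + 3 ≤ N + L + (nx + nd) → dm (k + 1) = Ad *ᵥ dm k)
    (hPE : (blockHankel um 0 (L + (nx + nd)) N).rank = (L + (nx + nd)) * nu)
    (ξ : (Fin nx ⊕ Fin nd) → ℝ) (η : Fin L × Fin nu → ℝ)
    (hker : (Sum.elim ξ η) ᵥ*
        (fromRows (hankelState (fun k => Sum.elim (xm k) (dm k)) 0 (N + (nx + nd)))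
                  (blockHankel um 0 L (N + (nx + nd)))) = 0) :
    η = 0 := by
  rcases Nat.eq_zero_or_pos L with rfl | hL
  · ext p
    exact p.1.elim0
  set z : ℕ → (Fin nx ⊕ Fin nd) → ℝ := fun k => Sum.elim (xm k) (dm k) with hzdef
  set n := nx + nd with hn
  let F : Matrix (Fin nx ⊕ Fin nd) (Fin nx ⊕ Fin nd) ℝ := fromBlocks A Bd 0 Ad
  let G : Matrix (Fin nx ⊕ Fin nd) (Fin nu) ℝ := fromRows B 0
  let e : ℕ → Fin nu → ℝ := fun p v => if h : p < L then η (⟨p, h⟩, v) else 0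
  have hη : η = fun p : Fin L × Fin nu => e p.1 p.2 := by
    ext ⟨p, v⟩
    simp [e]
  have he : ∀ p, L ≤ p → e p = 0 := by
    intro p hp
    ext v
    simp [e, not_lt.2 hp]
  have hz : ∀ k, k + 1 < N + n → z (k + 1) = F *ᵥ z k + G *ᵥ um k := by
    intro k hk
    ext (i | i)
    · simp [z, F, G, fromBlocks_mulVec, fromRows_mulVec, htraj_x k (by omega)]
    · simp [z, F, G, fromBlocks_mulVec, fromRows_mulVec, htraj_d k (by omega)]
  have h0 : ∀ K, L ≤ K → ∀ b, b < N + n →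
      ξ ⬝ᵥ z b + ∑ p ∈ Finset.range K, e p ⬝ᵥ um (b + p) = 0 := by
    intro K hK b hb
    have h := congrFun hker ⟨b, hb⟩
    rw [vecMul_fromRows, Pi.add_apply, Sum.elim_comp_inl, Sum.elim_comp_inr, hη,
      vecMul_blockHankel] at h
    rw [← Finset.sum_subset (Finset.range_subset_range.2 hK)]
    · simpa [vecMul, hankelState, dotProduct] using h
    · intro p _ hp
      rw [he p (by simpa using hp), zero_dotProduct]
  have hrel := shiftCoeff_relation F G ξ e z um (N + n) L hz h0
  let c : ℕ → ℝ := fun j => F.charpoly.coeff j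
  have hdeg : F.charpoly.natDegree = n := by simp [charpoly_natDegree_eq_dim, hn]
  have hcn : c n = 1 := by
    have := F.charpoly_monic.coeff_natDegree
    rwa [hdeg] at this
  have hCH : ∑ j ∈ Finset.range (n + 1), c j • F ^ j = 0 := by
    have h := F.aeval_self_charpoly
    rwa [Polynomial.aeval_eq_sum_range, hdeg] at h
  let f : ℕ → Fin nu → ℝ := fun p => ∑ j ∈ Finset.range (n + 1), c j • shiftCoeff F G ξ e j p
  have hf0 : (fun p : Fin (L + n) × Fin nu => f p.1 p.2) = 0 := by
    apply vecMul_injective_of_rank _ (by simpa using hPE)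
    ext b
    rw [vecMul_blockHankel]
    -- the combination of the shifted relations, whose state part is zero by Cayley–Hamilton
    have hsum : ∑ j ∈ Finset.range (n + 1), c j * ((ξ ᵥ* F ^ j) ⬝ᵥ z b +
        ∑ p ∈ Finset.range (L + n), shiftCoeff F G ξ e j p ⬝ᵥ um (b + p)) = 0 := by
      refine Finset.sum_eq_zero fun j hj => ?_
      have := Finset.mem_range.1 hj
      rw [hrel j (L + n) (by omega) b (by omega), mul_zero]
    have hstate : ∑ j ∈ Finset.range (n + 1), c j * ((ξ ᵥ* F ^ j) ⬝ᵥ z b) = 0 := by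
      have h : ξ ⬝ᵥ ((∑ j ∈ Finset.range (n + 1), c j • F ^ j) *ᵥ z b) = 0 := by simp [hCH]
      simpa [sum_mulVec, dotProduct_sum, smul_mulVec, dotProduct_mulVec] using h
    simp only [mul_add, Finset.sum_add_distrib, hstate, zero_add, Finset.mul_sum] at hsum
    rw [Finset.sum_comm] at hsum
    simpa [f, sum_dotProduct] using hsum
  have hzero := eq_zero_of_triangular n L c hcn e he (fun q hq => by
    have h : f (q + n) = 0 := by
      ext v
      exact congrFun hf0 (⟨q + n, by omega⟩, v)
    rw [← h]
    refine Finset.sum_congr rfl fun j hj => ?_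
    have := Finset.mem_range.1 hj
    rw [← shiftCoeff_add F G ξ e j, show q + (n - j) + j = q + n by omega])
  rw [hη]
  ext p
  simp [hzero]
end
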